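/- arXiv:math/0209364 — 2 statements merged into one kernel-verified Lean document; each statement's English description precedes it below -/
import Mathlib

section
/- In the standard coordinate arrangement of d+1 hyperspheres in S^d, any homeomorphism φ: S^d → S^d that fixes each Sᵢ⁺ = {xᵢ > 0} setwise for i = 2,...,d+1 and maps {x₁ > 0} onto {x₁ < 0} is orientation reversing. -/
namespace SideSwap
open MeasureTheory Measure Module Set
open scoped NNReal ENNReal

lemma det_nonneg_aux {E : Type*} [NormedAddCommGroup E] [NormedSpace ℝ E] [FiniteDimensional ℝ E]
    (A : E →L[ℝ] E) (s L : ℝ) (hA : ‖A‖ ≤ L) (hs : L < s) :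
    0 ≤ (s • ContinuousLinearMap.id ℝ E + A).det := by
  by_contra hneg
  push Not at hneg
  have hL : 0 ≤ L := (norm_nonneg _).trans hA
  let f : ℝ → ℝ := fun t => (s • ContinuousLinearMap.id ℝ E + t • A).det
  have hf : Continuous f := by
    apply ContinuousLinearMap.continuous_det.comp
    fun_prop
  have h0 : 0 < f 0 := by
    have : f 0 = s ^ finrank ℝ E := by
      simp only [f, zero_smul, add_zero, ContinuousLinearMap.det]
      simp
    rw [this]; exact pow_pos (by linarith) _
  have h1 : f 1 < 0 := by simpa [f] using hneg
  obtain ⟨t, ht, hft⟩ := intermediate_value_Icc' (zero_le_one) hf.continuousOn ⟨h1.le, h0.le⟩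
  have hk := LinearMap.bot_lt_ker_of_det_eq_zero (f := (s • ContinuousLinearMap.id ℝ E + t • A : E →L[ℝ] E).toLinearMap) hft
  obtain ⟨v, hv, hv0⟩ := Submodule.exists_mem_ne_zero_of_ne_bot hk.ne'
  have hv1 : s • v + t • A v = 0 := by simpa using hv
  have h2 : s • v = - (t • A v) := eq_neg_of_add_eq_zero_left hv1
  have h3 : s * ‖v‖ = t * ‖A v‖ := by
    have := congrArg norm h2
    rw [norm_neg, norm_smul, norm_smul, Real.norm_of_nonneg (by linarith), Real.norm_of_nonneg ht.1] at this
    exact this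
  have h4 := A.le_opNorm v
  have h5 : 0 < ‖v‖ := norm_pos_iff.2 hv0
  have h6 : t * ‖A v‖ ≤ 1 * (L * ‖v‖) := by
    apply mul_le_mul ht.2 (h4.trans (by gcongr)) (norm_nonneg _) zero_le_one
  nlinarith

section
variable {E : Type*} [NormedAddCommGroup E] [NormedSpace ℝ E] [FiniteDimensional ℝ E]

lemma approx_aux (G : E → E) (L : ℝ≥0) (hG : LipschitzWith L G) (s : ℝ) (hs : L < s) :
    Function.Bijective (fun x => s • x + G x) := by
  have hs0 : s ≠ 0 := by have := L.2; intro h; rw [h] at hs; exact absurd this (not_le.2 hs)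
  have hsp : 0 < s := lt_of_le_of_lt L.2 hs
  let e : E ≃L[ℝ] E := ContinuousLinearEquiv.smulLeft (Units.mk0 s hs0)
  have hap : ApproximatesLinearOn (fun x => s • x + G x) (e : E →L[ℝ] E) univ L := by
    intro x _ y _
    have : (s • x + G x) - (s • y + G y) - (e : E →L[ℝ] E) (x - y) = G x - G y := by
      have : (e : E →L[ℝ] E) (x - y) = s • (x - y) := rfl
      rw [this, smul_sub]; abel
    rw [this]
    simpa [dist_eq_norm] using hG.dist_le_mul x y
  have hc : Subsingleton E ∨ L < ‖(e.symm : E →L[ℝ] E)‖₊⁻¹ := by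
    rcases subsingleton_or_nontrivial E with h | h
    · exact Or.inl h
    · right
      have h1 : ‖(e.symm : E →L[ℝ] E)‖ ≤ s⁻¹ := by
        refine ContinuousLinearMap.opNorm_le_bound _ (by positivity) fun v => ?_
        have : (e.symm : E →L[ℝ] E) v = s⁻¹ • v := rfl
        rw [this, norm_smul, Real.norm_of_nonneg (by positivity)]
      have h2 : 0 < ‖(e.symm : E →L[ℝ] E)‖ := e.symm.norm_pos
      have : (L : ℝ) < ‖(e.symm : E →L[ℝ] E)‖⁻¹ := hs.trans_le (by
        rw [le_inv_comm₀ hsp h2]; exact h1)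
      exact_mod_cast this
  exact ⟨injOn_univ.1 (hap.injOn hc), hap.surjective hc⟩


lemma volume_aux [MeasurableSpace E] [BorelSpace E] (G : E → E) (L : ℝ≥0) (hG : LipschitzWith L G) (s : ℝ) (hs : L < s)
    (B : Set E) (hB : MeasurableSet B) (hBb : Bornology.IsBounded B) :
    IntegrableOn (fun x => (s • ContinuousLinearMap.id ℝ E + fderiv ℝ G x).det) B μH[finrank ℝ E] ∧
    ∫ x in B, (s • ContinuousLinearMap.id ℝ E + fderiv ℝ G x).det ∂μH[finrank ℝ E] =
      (μH[finrank ℝ E] : Measure E).real ((fun x => s • x + G x) '' B) := by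
  have := isAddHaarMeasure_hausdorffMeasure (E := E)
  set μ : Measure E := μH[finrank ℝ E] with hμ
  set F : E → E := fun x => s • x + G x with hF
  set J : E → ℝ := fun x => (s • ContinuousLinearMap.id ℝ E + fderiv ℝ G x).det with hJ
  have hbij := approx_aux G L hG s hs
  have hFl : LipschitzWith (‖s‖₊ + L) F := (lipschitzWith_smul s).add hG
  let D : Set E := {x | DifferentiableAt ℝ G x}
  have hD : MeasurableSet D := measurableSet_of_differentiableAt ℝ G
  have hDae : μ Dᶜ = 0 := hG.ae_differentiableAt (μ := μ)
  have hBD : (B ∩ D : Set E) =ᵐ[μ] B := by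
    refine inter_ae_eq_left_of_ae_eq_univ ?_
    exact ae_eq_univ.2 hDae
  have hder : ∀ x ∈ B ∩ D, HasFDerivWithinAt F (s • ContinuousLinearMap.id ℝ E + fderiv ℝ G x) (B ∩ D) x := by
    intro x hx
    have h1 : HasFDerivAt G (fderiv ℝ G x) x := DifferentiableAt.hasFDerivAt hx.2
    exact (((hasFDerivAt_id x).const_smul s).add h1).hasFDerivWithinAt
  have hJ0 : ∀ x, 0 ≤ J x := fun x => det_nonneg_aux _ s L (norm_fderiv_le_of_lipschitz ℝ hG) hs
  have himg : μ (F '' (B ∩ D)) = μ (F '' B) := by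
    apply le_antisymm (measure_mono (image_mono inter_subset_left))
    have h1 : F '' B ⊆ F '' (B ∩ D) ∪ F '' Dᶜ := by
      rw [← image_union]; apply image_mono; intro x hx
      by_cases h : x ∈ D
      · exact Or.inl ⟨hx, h⟩
      · exact Or.inr h
    have h2 : μ (F '' Dᶜ) = 0 := by
      have := (hFl.lipschitzOnWith (s := Dᶜ)).hausdorffMeasure_image_le (d := finrank ℝ E) (by positivity)
      rw [← hμ, hDae, mul_zero] at this
      exact le_antisymm this bot_le
    calc μ (F '' B) ≤ _ := measure_mono h1
      _ ≤ _ := measure_union_le _ _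
      _ = _ := by rw [h2, add_zero]
  have hcv := lintegral_abs_det_fderiv_eq_addHaar_image μ (hB.inter hD) hder hbij.1.injOn
  rw [himg, setLIntegral_congr hBD] at hcv
  have hcv' : ∫⁻ x in B, ENNReal.ofReal (J x) ∂μ = μ (F '' B) := by
    rw [← hcv]; congr with x; rw [abs_of_nonneg (hJ0 x)]
  have hfin : μ (F '' B) < ⊤ := by
    have : Bornology.IsBounded (F '' B) := hFl.isBounded_image hBb
    exact this.measure_lt_top
  have hmeas : Measurable J := by
    apply ContinuousLinearMap.continuous_det.measurable.comp
    exact (measurable_fderiv ℝ G).const_add _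
  constructor
  · refine ⟨hmeas.aestronglyMeasurable, ?_⟩
    rw [hasFiniteIntegral_iff_ofReal (Filter.Eventually.of_forall hJ0), hcv']
    exact hfin
  · rw [integral_eq_lintegral_of_nonneg_ae (Filter.Eventually.of_forall hJ0) hmeas.aestronglyMeasurable, hcv']
    rfl

lemma interp_aux (A : E →L[ℝ] E) (n : ℕ) (v : ℕ → ℝ) (hv : Function.Injective v) (hn : finrank ℝ E < n) :
    A.det = ∑ i ∈ Finset.range n, (Lagrange.basis (Finset.range n) v i).eval 0 *
      (v i • ContinuousLinearMap.id ℝ E + A).det := by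
  let p := (-A.toLinearMap).charpoly
  have hp : ∀ t, p.eval t = (t • ContinuousLinearMap.id ℝ E + A).det := by
    intro t
    simp only [p, LinearMap.eval_charpoly, ContinuousLinearMap.det]
    congr 1
    ext x
    simp [Algebra.algebraMap_eq_smul_one]
  have h0 : A.det = p.eval 0 := by rw [hp]; simp
  have hdeg : p.degree < (Finset.range n).card := by
    rw [Finset.card_range]
    refine lt_of_le_of_lt Polynomial.degree_le_natDegree ?_
    rw [LinearMap.charpoly_natDegree]
    exact_mod_cast hn
  rw [h0]
  nth_rewrite 1 [Lagrange.eq_interpolate (s := Finset.range n) (v := v) hv.injOn hdeg]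
  rw [Lagrange.interpolate_apply, Polynomial.eval_finsetSum]
  refine Finset.sum_congr rfl fun i _ => ?_
  rw [Polynomial.eval_mul, Polynomial.eval_C, hp, mul_comm]

theorem degree_aux [MeasurableSpace E] [BorelSpace E] (G₁ G₂ : E → E) (L : ℝ≥0) (h₁ : LipschitzWith L G₁) (h₂ : LipschitzWith L G₂)
    (B : Set E) (hB : MeasurableSet B) (hBb : Bornology.IsBounded B) (h : ∀ x ∉ B, G₁ x = G₂ x) :
    ∫ x in B, (fderiv ℝ G₁ x).det ∂μH[finrank ℝ E] = ∫ x in B, (fderiv ℝ G₂ x).det ∂μH[finrank ℝ E] := by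
  let v : ℕ → ℝ := fun i => L + 1 + i
  have hv : Function.Injective v := fun i j hij => by simpa [v] using hij
  have hvL : ∀ i, (L : ℝ) < v i := fun i => by
    have : (0:ℝ) ≤ i := Nat.cast_nonneg i
    simp only [v]; linarith
  have key : ∀ G : E → E, LipschitzWith L G → ∫ x in B, (fderiv ℝ G x).det ∂μH[finrank ℝ E] =
      ∑ i ∈ Finset.range (finrank ℝ E + 1), (Lagrange.basis (Finset.range (finrank ℝ E + 1)) v i).eval 0 *
      (μH[finrank ℝ E] : Measure E).real ((fun x => v i • x + G x) '' B) := by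
    intro G hG
    simp_rw [fun x => interp_aux (fderiv ℝ G x) (finrank ℝ E + 1) v hv (Nat.lt_succ_self _)]
    rw [integral_finsetSum]
    · refine Finset.sum_congr rfl fun i _ => ?_
      rw [integral_const_mul, (volume_aux G L hG (v i) (hvL i) B hB hBb).2]
    · intro i _
      exact (volume_aux G L hG (v i) (hvL i) B hB hBb).1.const_mul _
  rw [key G₁ h₁, key G₂ h₂]
  refine Finset.sum_congr rfl fun i _ => ?_
  congr 2
  have b₁ := approx_aux G₁ L h₁ (v i) (hvL i)
  have b₂ := approx_aux G₂ L h₂ (v i) (hvL i)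
  apply compl_injective
  rw [← image_compl_eq b₁, ← image_compl_eq b₂]
  apply image_congr
  intro x hx
  simp only [h x hx]
end

section
variable {E : Type*} [NormedAddCommGroup E] [InnerProductSpace ℝ E]

/-- radial projection to the closed unit ball -/
noncomputable def radProj (y : E) : E := (max 1 ‖y‖)⁻¹ • y

lemma radProj_lip : LipschitzWith 2 (radProj : E → E) := by
  refine LipschitzWith.of_dist_le_mul fun y z => ?_
  rw [dist_eq_norm, dist_eq_norm]
  simp only [radProj]
  set a := max 1 ‖y‖ with ha
  set b := max 1 ‖z‖ with hb
  have ha1 : 1 ≤ a := le_max_left _ _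
  have hb1 : 1 ≤ b := le_max_left _ _
  have hzb : ‖z‖ ≤ b := le_max_right _ _
  have hab : |a - b| ≤ ‖y - z‖ := by
    refine (abs_max_sub_max_le_max 1 ‖y‖ 1 ‖z‖).trans ?_
    simpa using abs_norm_sub_norm_le y z
  have e : a⁻¹ • y - b⁻¹ • z = a⁻¹ • ((y - z) + ((b - a) * b⁻¹) • z) := by
    have h1 : a⁻¹ * ((b - a) * b⁻¹) = a⁻¹ - b⁻¹ := by field_simp
    rw [smul_add, smul_smul, h1, smul_sub, sub_smul]; abel
  rw [e, norm_smul, Real.norm_of_nonneg (by positivity)]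
  have h2 : ‖((b - a) * b⁻¹) • z‖ ≤ ‖y - z‖ := by
    rw [norm_smul, norm_mul, Real.norm_eq_abs, abs_sub_comm, norm_inv, Real.norm_of_nonneg (by linarith : 0 ≤ b),
      mul_assoc]
    have h3 : b⁻¹ * ‖z‖ ≤ 1 := by
      rw [inv_mul_le_iff₀ (by linarith)]; simpa using hzb
    have := mul_le_mul hab h3 (by positivity) (norm_nonneg _)
    simpa using this
  have h4 := norm_add_le (y - z) (((b - a) * b⁻¹) • z)
  have h5 : a⁻¹ ≤ 1 := inv_le_one_of_one_le₀ ha1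
  have := mul_le_mul h5 h4 (norm_nonneg _) zero_le_one
  simp only [NNReal.coe_ofNat]
  linarith

lemma radProj_of_le {y : E} (h : ‖y‖ ≤ 1) : radProj y = y := by
  simp [radProj, max_eq_left h]

lemma norm_radProj {y : E} (h : 1 ≤ ‖y‖) : ‖radProj y‖ = 1 := by
  rw [radProj, max_eq_right h, norm_smul, norm_inv, norm_norm, inv_mul_cancel₀ (by linarith)]

variable [FiniteDimensional ℝ E] [Nontrivial E]

lemma det_zero_aux (G : E → E) (x : E) (h : ∀ᶠ y in nhds x, ‖G y‖ = 1) : (fderiv ℝ G x).det = 0 := by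
  by_contra hne
  have hsurj : Function.Surjective (fderiv ℝ G x) := by
    have := (LinearMap.equivOfDetNeZero (fderiv ℝ G x).toLinearMap hne).surjective
    exact this
  have hd : DifferentiableAt ℝ G x := by
    by_contra hd
    rw [fderiv_zero_of_not_differentiableAt hd] at hsurj
    obtain ⟨v, hv⟩ := exists_ne (0 : E)
    obtain ⟨w, hw⟩ := hsurj v
    exact hv (by simpa using hw.symm)
  have h1 := hd.hasFDerivAt.inner ℝ hd.hasFDerivAt
  have h2 : HasFDerivAt (fun y => inner ℝ (G y) (G y)) (0 : E →L[ℝ] ℝ) x := by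
    refine (hasFDerivAt_const (1:ℝ) x).congr_of_eventuallyEq ?_
    filter_upwards [h] with y hy
    simp [hy]
  have h3 := h1.unique h2
  obtain ⟨v, hv⟩ := hsurj (G x)
  have h4 := congrArg (fun f : E →L[ℝ] ℝ => f v) h3
  have h5 : ‖G x‖ = 1 := h.self_of_nhds
  simp [hv, h5] at h4
  try norm_num at h4

variable [MeasurableSpace E] [BorelSpace E]

lemma int_aux (W : E → E) (hWc : Continuous W) (r : E ≃ₗᵢ[ℝ] E) (hW1 : ∀ x, ‖x‖ ≤ 2 → W x = r x)
    (hW2 : ∀ x, 1 ≤ ‖x‖ → 1 ≤ ‖W x‖) :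
    ∫ x in Metric.closedBall (0:E) 5, (fderiv ℝ (fun y => radProj (W y)) x).det ∂μH[finrank ℝ E] =
      (LinearMap.det (r.toLinearEquiv : E →ₗ[ℝ] E)) * (μH[finrank ℝ E] : Measure E).real (Metric.ball 0 1) := by
  set μ : Measure E := μH[finrank ℝ E] with hμ
  have hae : ∀ᵐ x ∂(μ.restrict (Metric.closedBall (0:E) 5)), (fderiv ℝ (fun y => radProj (W y)) x).det =
      (Metric.ball (0:E) 1).indicator (fun _ => LinearMap.det (r.toLinearEquiv : E →ₗ[ℝ] E)) x := by
    apply ae_restrict_of_ae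
    have hs : μ (Metric.sphere (0:E) 1) = 0 := addHaar_sphere μ 0 1
    have hs' : ∀ᵐ x ∂μ, x ∉ Metric.sphere (0:E) 1 := measure_eq_zero_iff_ae_notMem.1 hs
    filter_upwards [hs'] with x hx
    rcases lt_trichotomy ‖x‖ 1 with h | h | h
    · rw [indicator_of_mem (by simpa using h)]
      have : (fun y => radProj (W y)) =ᶠ[nhds x] (r.toContinuousLinearEquiv : E →L[ℝ] E) := by
        have : ∀ᶠ y in nhds x, ‖y‖ < 1 := (continuous_norm.tendsto x).eventually (gt_mem_nhds h)
        filter_upwards [this] with y hy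
        rw [hW1 y (by linarith), radProj_of_le (by rw [r.norm_map]; exact hy.le)]
        rfl
      rw [this.fderiv_eq, ContinuousLinearMap.fderiv]
      rfl
    · exact absurd (by simpa using h) hx
    · rw [indicator_of_notMem (by simpa using h.le)]
      apply det_zero_aux
      have : ∀ᶠ y in nhds x, 1 < ‖y‖ := (continuous_norm.tendsto x).eventually (lt_mem_nhds h)
      filter_upwards [this] with y hy
      exact norm_radProj (hW2 y hy.le)
  rw [integral_congr_ae hae, setIntegral_indicator measurableSet_ball, setIntegral_const]
  rw [inter_eq_self_of_subset_right (Metric.ball_subset_closedBall.trans (Metric.closedBall_subset_closedBall (by norm_num)))]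
  rw [smul_eq_mul, mul_comm]

lemma no_map (r : E ≃ₗᵢ[ℝ] E) (hr : LinearMap.det (r.toLinearEquiv : E →ₗ[ℝ] E) ≠ 1) (P : E → E)
    (hP : Continuous P) (hPn : ∀ x, ‖P x‖ = ‖x‖) (hP1 : ∀ x, ‖x‖ ≤ 3 → P x = r x)
    (hP2 : ∀ x, 4 ≤ ‖x‖ → P x = x) : False := by
  let S : Set E := {x | ‖x‖ ≤ 2} ∪ {x | 5 ≤ ‖x‖}
  let U : Set E := {x | ‖x‖ < 3} ∪ {x | 4 < ‖x‖}
  have hU1 : IsOpen {x : E | ‖x‖ < 3} := isOpen_lt continuous_norm continuous_const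
  have hU2 : IsOpen {x : E | 4 < ‖x‖} := isOpen_lt continuous_const continuous_norm
  have hU : U ∈ nhdsSet S := by
    refine (hU1.union hU2).mem_nhdsSet.2 ?_
    rintro x (hx | hx)
    · left; simp only [mem_ofPred_eq] at hx ⊢; linarith
    · right; simp only [mem_ofPred_eq] at hx ⊢; linarith
  have hS : IsClosed S := (isClosed_le continuous_norm continuous_const).union (isClosed_le continuous_const continuous_norm)
  have hPU : ContDiffOn ℝ ((⊤ : ℕ∞) : WithTop ℕ∞) P U := by
    rintro x (hx | hx)
    · have : ContDiffAt ℝ ((⊤ : ℕ∞) : WithTop ℕ∞) P x := by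
        refine (r.contDiff.contDiffAt (x := x)).congr_of_eventuallyEq ?_
        filter_upwards [hU1.mem_nhds hx] with y hy using hP1 y (le_of_lt hy)
      exact this.contDiffWithinAt
    · have : ContDiffAt ℝ ((⊤ : ℕ∞) : WithTop ℕ∞) P x := by
        refine (contDiffAt_id (x := x)).congr_of_eventuallyEq ?_
        filter_upwards [hU2.mem_nhds hx] with y hy using hP2 y (le_of_lt hy)
      exact this.contDiffWithinAt
  obtain ⟨W, hWs, hWd, hWS, -⟩ := hP.exists_contDiff_approx_and_eqOn (⊤ : ℕ∞) (ε := fun _ => 1) continuous_const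
    (fun _ => one_pos) hS hU hPU
  have hW1 : ∀ x, ‖x‖ ≤ 2 → W x = r x := fun x hx => (hWS (Or.inl hx)).trans (hP1 x (by linarith))
  have hW5 : ∀ x, 5 ≤ ‖x‖ → W x = x := fun x hx => (hWS (Or.inr hx)).trans (hP2 x (by linarith))
  have hW2 : ∀ x, 1 ≤ ‖x‖ → 1 ≤ ‖W x‖ := by
    intro x hx
    by_cases h : ‖x‖ ≤ 2
    · rw [hW1 x h, r.norm_map]; exact hx
    · have h1 := hWd x
      rw [dist_comm, dist_eq_norm] at h1
      have h2 := norm_sub_norm_le (P x) (W x)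
      rw [hPn] at h2
      push Not at h
      linarith
  have hcs : HasCompactSupport (fun x => W x - x) := by
    refine HasCompactSupport.intro (isCompact_closedBall (0:E) 5) fun x hx => ?_
    have : 5 < ‖x‖ := by simpa using hx
    rw [hW5 x this.le, sub_self]
  obtain ⟨C, hC⟩ := ContDiff.lipschitzWith_of_hasCompactSupport hcs (hWs.sub contDiff_id) (by simp)
  have hWl : LipschitzWith (C + 1) W := by
    have := hC.add LipschitzWith.id
    simpa using this
  have hG1 : LipschitzWith (2 * (C + 1)) (fun y => radProj (W y)) := radProj_lip.comp hWl
  have hG2 : LipschitzWith (2 * (C + 1)) (fun y : E => radProj y) :=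
    radProj_lip.weaken (by simp)
  have key := degree_aux _ _ _ hG1 hG2 (Metric.closedBall (0:E) 5) Metric.isClosed_closedBall.measurableSet
    Metric.isBounded_closedBall (fun x hx => by
      have : 5 < ‖x‖ := by simpa using hx
      rw [hW5 x this.le])
  have i1 := int_aux W hWs.continuous r hW1 hW2
  have i2 := int_aux (fun x : E => x) continuous_id (LinearIsometryEquiv.refl ℝ E) (fun x _ => rfl) (fun x h => h)
  rw [i1, i2] at key
  have hpos : (0:ℝ) < (μH[finrank ℝ E] : Measure E).real (Metric.ball 0 1) :=
    ENNReal.toReal_pos (Metric.measure_ball_pos _ _ one_pos).ne' Metric.isBounded_ball.measure_lt_top.ne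
  have := mul_right_cancel₀ hpos.ne' key
  apply hr
  rw [this]
  exact LinearMap.det_id

lemma no_homotopy (r : E ≃ₗᵢ[ℝ] E) (hr : LinearMap.det (r.toLinearEquiv : E →ₗ[ℝ] E) ≠ 1)
    (ρ : C(Metric.sphere (0:E) 1, Metric.sphere (0:E) 1)) (hρ : ∀ x, (ρ x : E) = r x)
    (h : ContinuousMap.Homotopic (ContinuousMap.id _) ρ) : False := by
  obtain ⟨H⟩ := h
  obtain ⟨b⟩ : Nonempty (Metric.sphere (0:E) 1) := (NormedSpace.sphere_nonempty.2 zero_le_one).to_subtype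
  classical
  let c : E → Metric.sphere (0:E) 1 := fun x => if hx : x = 0 then b else
    ⟨‖x‖⁻¹ • x, by simp [norm_smul, norm_ne_zero_iff.2 hx]⟩
  have hcv : ∀ x, x ≠ 0 → (c x : E) = ‖x‖⁻¹ • x := fun x hx => by simp [c, hx]
  have hcs : ∀ x, ‖x‖ • (c x : E) = x := fun x => by
    by_cases hx : x = 0
    · simp [hx]
    · rw [hcv x hx, smul_inv_smul₀ (norm_ne_zero_iff.2 hx)]
  have hcc : ∀ x, x ≠ 0 → ContinuousAt c x := fun x hx => by
    rw [Topology.IsInducing.subtypeVal.continuousAt_iff]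
    have h1 : ContinuousAt (fun y : E => ‖y‖⁻¹ • y) x :=
      (continuousAt_id.norm.inv₀ (norm_ne_zero_iff.2 hx)).smul continuousAt_id
    refine h1.congr ?_
    filter_upwards [isOpen_ne.mem_nhds hx] with y hy
    exact (hcv y hy).symm
  let τ : E → unitInterval := fun x => projIcc 0 1 zero_le_one (4 - ‖x‖)
  have hτ : Continuous τ := continuous_projIcc.comp (continuous_const.sub continuous_norm)
  let P : E → E := fun x => ‖x‖ • (H (τ x, c x) : E)
  have hPn : ∀ x, ‖P x‖ = ‖x‖ := fun x => by
    have : ‖(H (τ x, c x) : E)‖ = 1 := by simpa using (H (τ x, c x)).2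
    simp only [P]
    rw [norm_smul, norm_norm, this, mul_one]
  refine no_map r hr P ?_ hPn ?_ ?_
  · rw [continuous_iff_continuousAt]
    intro x
    by_cases hx : x = 0
    · subst hx
      have h0 : P 0 = 0 := by simp [P]
      rw [ContinuousAt, h0, tendsto_zero_iff_norm_tendsto_zero]
      simp_rw [hPn]
      simpa using continuous_norm.tendsto (0:E)
    · have h1 : ContinuousAt (fun y => (H (τ y, c y) : E)) x :=
        continuous_subtype_val.continuousAt.comp
          (H.continuous.continuousAt.comp (hτ.continuousAt.prodMk (hcc x hx)))
      exact continuousAt_id.norm.smul h1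
  · intro x hx
    have : τ x = 1 := projIcc_of_right_le _ (by linarith)
    simp only [P, this, H.apply_one, hρ]
    rw [← map_smul, hcs]
  · intro x hx
    have : τ x = 0 := projIcc_of_le_left _ (by linarith)
    simp only [P, this, H.apply_zero, ContinuousMap.id_apply]
    rw [hcs]
end

lemma homotopic_of_ne_neg {E : Type*} [NormedAddCommGroup E] [InnerProductSpace ℝ E]
    (f g : C(Metric.sphere (0:E) 1, Metric.sphere (0:E) 1)) (h : ∀ x, (f x : E) ≠ - (g x : E)) :
    f.Homotopic g := by
  have hne : ∀ p : unitInterval × Metric.sphere (0:E) 1,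
      (1 - (p.1 : ℝ)) • (f p.2 : E) + (p.1 : ℝ) • (g p.2 : E) ≠ 0 := by
    rintro ⟨t, x⟩ h0
    have hf : ‖(f x : E)‖ = 1 := by simpa using (f x).2
    have hg : ‖(g x : E)‖ = 1 := by simpa using (g x).2
    have h1 : (1 - (t : ℝ)) • (f x : E) = - ((t : ℝ) • (g x : E)) := eq_neg_of_add_eq_zero_left h0
    have h2 : 1 - (t:ℝ) = t := by
      have := congrArg norm h1
      rwa [norm_neg, norm_smul, norm_smul, hf, hg, Real.norm_of_nonneg (by linarith [t.2.2]),
        Real.norm_of_nonneg t.2.1, mul_one, mul_one] at this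
    have h3 : (t : ℝ) = 1 / 2 := by linarith
    rw [h2, ← smul_neg] at h1
    exact h x (smul_right_injective E (by rw [h3]; norm_num : (t:ℝ) ≠ 0) h1)
  let k : unitInterval × Metric.sphere (0:E) 1 → E := fun p =>
      (1 - (p.1 : ℝ)) • (f p.2 : E) + (p.1 : ℝ) • (g p.2 : E)
  have hk : Continuous k := by fun_prop
  refine ⟨{ toFun := fun p => ⟨‖k p‖⁻¹ • k p, by
              rw [mem_sphere_zero_iff_norm, norm_smul, norm_inv, norm_norm]
              exact inv_mul_cancel₀ (norm_ne_zero_iff.2 (hne p))⟩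
            continuous_toFun := ?_
            map_zero_left := ?_
            map_one_left := ?_ }⟩
  · exact ((hk.norm.inv₀ fun p => norm_ne_zero_iff.2 (hne p)).smul hk).subtype_mk _
  · intro x; ext1
    have : ‖(f x : E)‖ = 1 := by simpa using (f x).2
    simp [k, this]
  · intro x; ext1
    have : ‖(g x : E)‖ = 1 := by simpa using (g x).2
    simp [k, this]

end SideSwap

open SideSwap
/-- in the standard coordinate arrangement of `d+1` hyperspheres in
`S^d`, any self-homeomorphism `φ` of `S^d` fixing each side `Sᵢ⁺ = {xᵢ > 0}` setwise
for `i ≥ 2` and mapping `{x₁ > 0}` onto `{x₁ < 0}` is orientation reversing.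
(Orientation reversing is formalized, via Hopf's theorem for self-maps of spheres,
as: `φ` is not homotopic to the identity.) -/
theorem side_swapping_homeo_orientation_reversing (d : ℕ)
    (φ : ↥(Metric.sphere (0 : EuclideanSpace ℝ (Fin (d + 1))) 1) ≃ₜ
      ↥(Metric.sphere (0 : EuclideanSpace ℝ (Fin (d + 1))) 1))
    (h0 : ∀ x : ↥(Metric.sphere (0 : EuclideanSpace ℝ (Fin (d + 1))) 1),
      0 < (x : EuclideanSpace ℝ (Fin (d + 1))) 0 ↔
        ((φ x : EuclideanSpace ℝ (Fin (d + 1))) 0 < 0))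
    (hi : ∀ i : Fin (d + 1), i ≠ 0 →
      ∀ x : ↥(Metric.sphere (0 : EuclideanSpace ℝ (Fin (d + 1))) 1),
        0 < (x : EuclideanSpace ℝ (Fin (d + 1))) i ↔
          0 < (φ x : EuclideanSpace ℝ (Fin (d + 1))) i) :
    ¬ (ContinuousMap.mk (φ : ↥(Metric.sphere (0 : EuclideanSpace ℝ (Fin (d + 1))) 1) →
          ↥(Metric.sphere (0 : EuclideanSpace ℝ (Fin (d + 1))) 1))
        φ.continuous).Homotopic (ContinuousMap.id _) := by
  set e : EuclideanSpace ℝ (Fin (d + 1)) := EuclideanSpace.single 0 1 with he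
  let K : Submodule ℝ (EuclideanSpace ℝ (Fin (d + 1))) := (ℝ ∙ e)ᗮ
  have hr0 : ∀ x, K.reflection x 0 = - x 0 := by
    intro x
    simp only [K, Submodule.reflection_orthogonal_apply, Submodule.reflection_singleton_apply]
    simp [he, EuclideanSpace.inner_single_left]
    ring
  have hri : ∀ i, i ≠ 0 → ∀ x, K.reflection x i = x i := by
    intro i hi x
    simp only [K, Submodule.reflection_orthogonal_apply, Submodule.reflection_singleton_apply]
    simp [he, hi]
  have hdet : LinearMap.det (K.reflection.toLinearEquiv :
      EuclideanSpace ℝ (Fin (d + 1)) →ₗ[ℝ] EuclideanSpace ℝ (Fin (d + 1))) ≠ 1 := by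
    have h1 := K.det_reflection
    have h2 : Module.finrank ℝ Kᗮ = 1 := by
      have h3 : Kᗮ = ℝ ∙ e := Submodule.orthogonal_orthogonal _
      rw [h3]
      have h4 : e ≠ 0 := by simp [he]
      exact finrank_span_singleton h4
    rw [h2, pow_one] at h1
    intro h
    have h3 := h.symm.trans h1
    norm_num at h3
  intro hh
  let ρ : C(Metric.sphere (0 : EuclideanSpace ℝ (Fin (d + 1))) 1,
      Metric.sphere (0 : EuclideanSpace ℝ (Fin (d + 1))) 1) :=
    ⟨fun x => ⟨K.reflection x, by simp⟩, by fun_prop⟩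
  refine no_homotopy K.reflection hdet ρ (fun x => rfl) (hh.symm.trans ?_)
  apply homotopic_of_ne_neg
  intro x hx
  have hc : ∀ i, (φ x : EuclideanSpace ℝ (Fin (d + 1))) i =
      - K.reflection (x : EuclideanSpace ℝ (Fin (d + 1))) i := by
    intro i
    exact congrArg (fun v : EuclideanSpace ℝ (Fin (d + 1)) => v i) hx
  have hx0 : (x : EuclideanSpace ℝ (Fin (d + 1))) = 0 := by
    ext i
    by_cases h : i = 0
    · subst h
      have h1 := hc 0
      rw [hr0, neg_neg] at h1
      have h2 := h0 x
      rw [h1] at h2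
      rcases lt_trichotomy ((x : EuclideanSpace ℝ (Fin (d + 1))) 0) 0 with h3 | h3 | h3
      · have := h2.2 h3; linarith
      · exact h3
      · have := h2.1 h3; linarith
    · have h1 := hc i
      rw [hri i h] at h1
      have h2 := hi i h x
      rw [h1] at h2
      rcases lt_trichotomy ((x : EuclideanSpace ℝ (Fin (d + 1))) i) 0 with h3 | h3 | h3
      · have := h2.2 (by linarith); linarith
      · exact h3
      · have := h2.1 h3; linarith
  have := x.2
  rw [hx0] at this
  simp at this
end

section
/- Let χ be a chirotope of rank r > 2 over E, and fix x₁,...,x_{r-2} ∈ 𝐄 such that χ([x₁,...,x_r]) = 1 for some x_{r-1},x_r. Then the set C(x₁,...,x_{r-2}) = { [y_{r-1},y_r] : χ([x₁,...,x_{r-2},y_{r-1},y_r]) = 1 } is the set of positively oriented bases of a chirotope of rank 2 over the subset of E consisting of elements appearing in some member of C(x₁,...,x_{r-2}). -/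
/-- The bar involution on signed indices: `(e, b) ↦ (e, ¬b)`. -/
def bar {α : Type*} (x : α × Bool) : α × Bool := (x.1, !x.2)

/-- A chirotope of rank `r` over `α`: a map from `r`-tuples of signed indices
(oriented `(r-1)`-simplices) to `{-1,0,+1}` satisfying axioms (C1)–(C4). -/
structure IsChirotope (r : ℕ) (α : Type*) (χ : (Fin r → α × Bool) → ℤ) : Prop where
  rpos : 0 < r
  values : ∀ σ : Fin r → α × Bool, χ σ = -1 ∨ χ σ = 0 ∨ χ σ = 1
  degenerate : ∀ σ : Fin r → α × Bool,
      ¬ Function.Injective (fun i => (σ i).1) → χ σ = 0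
  c1 : ∀ e : α, ∃ τ : Fin r → α, (∃ i, τ i = e) ∧ χ (fun i => (τ i, true)) ≠ 0
  c2neg : ∀ (σ : Fin r → α × Bool) (i : Fin r), i.val = r - 1 →
      χ (Function.update σ i (bar (σ i))) = - χ σ
  c2swap : ∀ (σ : Fin r → α × Bool) (i j : Fin r), j.val = i.val + 1 →
      χ (fun m => if m = i then bar (σ j) else if m = j then σ i else σ m) = χ σ
  c3 : ∀ σ τ : Fin r → α × Bool, χ σ ≠ 0 → χ τ ≠ 0 →
      ∃ i, χ (Function.update σ ⟨r - 1, Nat.sub_lt rpos one_pos⟩ (τ i)) ≠ 0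
  c4 : ∀ (σ : Fin r → α × Bool) (y₁ y₂ : α × Bool),
      0 ≤ χ (Function.update σ ⟨r - 2, Nat.sub_lt rpos two_pos⟩ y₁) *
          χ (Function.update σ ⟨r - 1, Nat.sub_lt rpos one_pos⟩ y₂) →
      0 ≤ χ (Function.update σ ⟨r - 2, Nat.sub_lt rpos two_pos⟩ y₂) *
          χ (Function.update σ ⟨r - 1, Nat.sub_lt rpos one_pos⟩ (bar y₁)) →
      0 ≤ χ σ *
          χ (Function.update (Function.update σ ⟨r - 2, Nat.sub_lt rpos two_pos⟩ y₁)
              ⟨r - 1, Nat.sub_lt rpos one_pos⟩ y₂)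

/-- Extend the fixed `(r-2)`-tuple `x` by two further signed indices `y₁, y₂` to an
`r`-tuple `[x₁,…,x_{r-2},y₁,y₂]`. -/
def extTwo {α : Type*} (r : ℕ) (x : Fin (r - 2) → α × Bool) (y₁ y₂ : α × Bool) :
    Fin r → α × Bool := fun i =>
  if h : i.val < r - 2 then x ⟨i.val, h⟩ else if i.val = r - 2 then y₁ else y₂

theorem ext_upd_fst {α : Type*} (r : ℕ) (hr : 2 < r) (x : Fin (r - 2) → α × Bool)
    (a b c : α × Bool) (hlt : r - 2 < r) :
    Function.update (extTwo r x a b) ⟨r - 2, hlt⟩ c = extTwo r x c b := by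
  funext i
  by_cases hi : i = ⟨r - 2, hlt⟩
  · subst hi; simp [extTwo]
  · have : i.val ≠ r - 2 := fun h => hi (Fin.ext h)
    rw [Function.update_of_ne hi]
    simp [extTwo, this]

theorem ext_upd_snd {α : Type*} (r : ℕ) (hr : 2 < r) (x : Fin (r - 2) → α × Bool)
    (a b c : α × Bool) (hlt : r - 1 < r) :
    Function.update (extTwo r x a b) ⟨r - 1, hlt⟩ c = extTwo r x a c := by
  funext i
  by_cases hi : i = ⟨r - 1, hlt⟩
  · subst hi
    have h1 : ¬ (r - 1 < r - 2) := by omega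
    have h2 : ¬ (r - 1 = r - 2) := by omega
    simp [extTwo, h1, h2]
  · have h0 : i.val ≠ r - 1 := fun h => hi (Fin.ext h)
    have := i.isLt
    rw [Function.update_of_ne hi]
    unfold extTwo
    by_cases h1 : i.val < r - 2
    · simp [h1]
    · have h2 : i.val = r - 2 := by omega
      simp [h2]

theorem ext_fst {α : Type*} (r : ℕ) (x : Fin (r - 2) → α × Bool)
    (a b : α × Bool) (hlt : r - 2 < r) : extTwo r x a b ⟨r - 2, hlt⟩ = a := by
  simp [extTwo]

theorem ext_snd {α : Type*} (r : ℕ) (hr : 2 < r) (x : Fin (r - 2) → α × Bool)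
    (a b : α × Bool) (hlt : r - 1 < r) : extTwo r x a b ⟨r - 1, hlt⟩ = b := by
  have h1 : ¬ (r - 1 < r - 2) := by omega
  have h2 : ¬ (r - 1 = r - 2) := by omega
  simp [extTwo, h1, h2]

theorem ext_neg {α : Type*} (r : ℕ) (hr : 2 < r)
    (χ : (Fin r → α × Bool) → ℤ) (h : IsChirotope r α χ)
    (x : Fin (r - 2) → α × Bool) (a b : α × Bool) :
    χ (extTwo r x a (bar b)) = - χ (extTwo r x a b) := by
  have hlt : r - 1 < r := by omega
  have := h.c2neg (extTwo r x a b) ⟨r - 1, hlt⟩ rfl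
  rwa [ext_snd r hr, ext_upd_snd r hr] at this

theorem ext_swap {α : Type*} (r : ℕ) (hr : 2 < r)
    (χ : (Fin r → α × Bool) → ℤ) (h : IsChirotope r α χ)
    (x : Fin (r - 2) → α × Bool) (a b : α × Bool) :
    χ (extTwo r x (bar b) a) = χ (extTwo r x a b) := by
  have hlt : r - 1 < r := by omega
  have hlt2 : r - 2 < r := by omega
  rw [← h.c2swap (extTwo r x a b) ⟨r - 2, hlt2⟩ ⟨r - 1, hlt⟩ (by simp only; omega)]
  rw [ext_snd r hr, ext_fst]
  congr 1
  funext m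
  by_cases h1 : m = ⟨r - 2, hlt2⟩
  · subst h1; simp [ext_fst]
  · by_cases h2 : m = ⟨r - 1, hlt⟩
    · subst h2; rw [ext_snd r hr, if_neg h1, if_pos rfl]
    · rw [if_neg h1, if_neg h2]
      have h3 : m.val ≠ r - 2 := fun h => h1 (Fin.ext h)
      have h4 : m.val ≠ r - 1 := fun h => h2 (Fin.ext h)
      have h5 : m.val < r - 2 := by have := m.isLt; omega
      simp [extTwo, h5]

theorem bar_bar_eq {α : Type*} (a : α × Bool) : bar (bar a) = a := by simp [bar]

theorem ext_neg_fst {α : Type*} (r : ℕ) (hr : 2 < r)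
    (χ : (Fin r → α × Bool) → ℤ) (h : IsChirotope r α χ)
    (x : Fin (r - 2) → α × Bool) (a b : α × Bool) :
    χ (extTwo r x (bar a) b) = - χ (extTwo r x a b) := by
  have h1 := ext_swap r hr χ h x b a
  have h2 := ext_swap r hr χ h x b (bar a)
  rw [bar_bar_eq, ext_neg r hr χ h] at h2
  rw [h1, h2, neg_neg]

theorem ext_true {α : Type*} (r : ℕ) (hr : 2 < r)
    (χ : (Fin r → α × Bool) → ℤ) (h : IsChirotope r α χ)
    (x : Fin (r - 2) → α × Bool) (a b : α × Bool) (hne : χ (extTwo r x a b) ≠ 0) :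
    χ (extTwo r x (a.1, true) (b.1, true)) ≠ 0 := by
  obtain ⟨a, s⟩ := a
  obtain ⟨b, t⟩ := b
  have h1 := ext_neg_fst r hr χ h x (a, true) (b, t)
  have h2 := ext_neg r hr χ h x (a, true) (b, true)
  simp only [bar, Bool.not_true] at h1 h2
  cases s <;> cases t <;> simp_all

/-- fixing `r-2` coordinates of a chirotope of rank `r > 2` yields a
rank-2 chirotope. The set `C(x₁,…,x_{r-2}) = {[y_{r-1},y_r] : χ([x₁,…,x_{r-2},y_{r-1},y_r]) = 1}`
is the set of positively oriented bases of a chirotope of rank 2 over the subset of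
`E` consisting of the elements appearing in some member of `C(x₁,…,x_{r-2})`. -/
theorem fixing_coordinates_rank_two {α : Type*} (r : ℕ) (hr : 2 < r)
    (χ : (Fin r → α × Bool) → ℤ) (h : IsChirotope r α χ)
    (x : Fin (r - 2) → α × Bool)
    (hx : ∃ y₁ y₂ : α × Bool, χ (extTwo r x y₁ y₂) = 1) :
    IsChirotope 2
      {a : α | ∃ y₁ y₂ : α × Bool, χ (extTwo r x y₁ y₂) = 1 ∧ (y₁.1 = a ∨ y₂.1 = a)}
      (fun τ : Fin 2 →
          {a : α | ∃ y₁ y₂ : α × Bool, χ (extTwo r x y₁ y₂) = 1 ∧ (y₁.1 = a ∨ y₂.1 = a)} × Bool =>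
        χ (extTwo r x (((τ 0).1 : α), (τ 0).2) (((τ 1).1 : α), (τ 1).2))) := by
  have hlt : r - 1 < r := by omega
  have hlt2 : r - 2 < r := by omega
  refine ⟨by norm_num, fun σ => h.values _, ?_, ?_, ?_, ?_, ?_, ?_⟩
  · intro σ hσ
    apply h.degenerate
    intro hinj
    apply hσ
    have key : ((σ 0).1 : α) ≠ (σ 1).1 := by
      intro he
      have := @hinj ⟨r - 2, hlt2⟩ ⟨r - 1, hlt⟩ (by
        simp only [ext_fst, ext_snd r hr]; exact he)
      simp only [Fin.mk.injEq] at this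
      omega
    intro i j hij
    have hij' : ((σ i).1 : α) = (σ j).1 := congrArg Subtype.val hij
    fin_cases i <;> fin_cases j
    · rfl
    · exact absurd hij' key
    · exact absurd hij'.symm key
    · rfl
  · rintro ⟨e, y₁, y₂, h1, he⟩
    refine ⟨![⟨y₁.1, y₁, y₂, h1, Or.inl rfl⟩, ⟨y₂.1, y₁, y₂, h1, Or.inr rfl⟩], ?_, ?_⟩
    · rcases he with he | he
      · exact ⟨0, Subtype.ext he⟩
      · exact ⟨1, Subtype.ext he⟩
    · exact ext_true r hr χ h x y₁ y₂ (by rw [h1]; norm_num)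
  · intro σ i hi
    have : i = 1 := Fin.ext hi
    subst this
    exact ext_neg r hr χ h x (((σ 0).1 : α), (σ 0).2) (((σ 1).1 : α), (σ 1).2)
  · intro σ i j hij
    have hi : i = 0 := Fin.ext (by have := j.isLt; simp only [Fin.val_zero]; omega)
    subst hi
    have hj : j = 1 := Fin.ext hij
    subst hj
    exact ext_swap r hr χ h x (((σ 0).1 : α), (σ 0).2) (((σ 1).1 : α), (σ 1).2)
  · intro σ τ hσ hτ
    obtain ⟨i, hi⟩ := h.c3 _ _ hσ hτ
    rw [ext_upd_snd r hr] at hi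
    by_cases h1 : i.val < r - 2
    · exfalso
      apply hi
      apply h.degenerate
      intro hinj
      have := @hinj i ⟨r - 1, hlt⟩ (by
        simp only [ext_snd r hr]
        simp [extTwo, h1])
      rw [this] at h1
      simp only at h1
      omega
    · by_cases h2 : i.val = r - 2
      · have h3 : i = ⟨r - 2, hlt2⟩ := Fin.ext h2
        rw [h3, ext_fst] at hi
        exact ⟨0, hi⟩
      · have h3 : i = ⟨r - 1, hlt⟩ := Fin.ext (by have := i.isLt; simp only; omega)
        rw [h3, ext_snd r hr] at hi
        exact ⟨1, hi⟩
  · intro σ y₁ y₂ h1 h2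
    have := h.c4 (extTwo r x (((σ 0).1 : α), (σ 0).2) (((σ 1).1 : α), (σ 1).2))
      ((y₁.1 : α), y₁.2) ((y₂.1 : α), y₂.2)
    simp only [ext_upd_fst r hr, ext_upd_snd r hr] at this
    exact this h1 h2
end
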